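/- If the analysis operator C of a sequence (ψ_k) is densely defined, then the frame operator S is closable. -/

import Mathlib

open Filter Topology
open scoped ComplexInnerProductSpace

/-!
If `f` lies in the domain of `S`, pairing the series `S f` with `f` gives `‖C f‖² = re ⟪f, S f⟫`,
and pairing it with `g` in the domain of `C` gives `|⟪g, S f⟫|² ≤ ‖C g‖² ‖C f‖²` by Cauchy–Schwarz.
The resulting estimate `|⟪g, y⟫|² ≤ ‖C g‖² re ⟪f, y⟫` on the graph of `S` passes to its closure. For
a pair `(0, y)` in the closure the right-hand side vanishes, so `y` is orthogonal to the dense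
domain of `C`.
-/

section Closable

variable {𝕜 H : Type*} [RCLike 𝕜] [NormedAddCommGroup H] [InnerProductSpace 𝕜 H]

theorem norm_inner_sq_le_of_mem_closure {G : Set (H × H)} {g : H} {c : ℝ}
    (hG : ∀ p ∈ G, ‖inner 𝕜 g p.2‖ ^ 2 ≤ c * RCLike.re (inner 𝕜 p.1 p.2))
    {p : H × H} (hp : p ∈ closure G) :
    ‖inner 𝕜 g p.2‖ ^ 2 ≤ c * RCLike.re (inner 𝕜 p.1 p.2) := by
  have closed : IsClosed {p : H × H |
      ‖inner 𝕜 g p.2‖ ^ 2 ≤ c * RCLike.re (inner 𝕜 p.1 p.2)} :=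
    isClosed_le (by fun_prop) (by fun_prop)
  exact closure_minimal hG closed hp

theorem isClosable_of_norm_inner_sq_le {T : H →ₗ.[𝕜] H} {s : Set H} (hs : Dense s)
    (hT : ∀ g ∈ s, ∃ c : ℝ, ∀ p ∈ T.graph,
      ‖inner 𝕜 g p.2‖ ^ 2 ≤ c * RCLike.re (inner 𝕜 p.1 p.2)) :
    T.IsClosable := by
  refine ⟨_, (Submodule.toLinearPMap_graph_eq _ fun p hp hp₁ => ?_).symm⟩
  refine hs.eq_zero_of_inner_right 𝕜 fun g hg => ?_
  obtain ⟨c, hc⟩ := hT g hg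
  have hle : ‖inner 𝕜 g p.2‖ ^ 2 ≤ 0 := by
    simpa only [hp₁, inner_zero_left, map_zero, mul_zero] using
      norm_inner_sq_le_of_mem_closure hc hp
  exact norm_eq_zero.mp (pow_eq_zero_iff two_ne_zero |>.mp (hle.antisymm (sq_nonneg _)))

end Closable

section FrameOperator

variable {𝕜 ι H : Type*} [RCLike 𝕜] [NormedAddCommGroup H] [InnerProductSpace 𝕜 H]
  {ψ : ι → H} {L : SummationFilter ι}

theorem norm_inner_sum_smul_sq_le (ψ : ι → H) (a : ι → 𝕜) (g : H) (s : Finset ι) :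
    ‖inner 𝕜 g (∑ k ∈ s, a k • ψ k)‖ ^ 2 ≤
      (∑ k ∈ s, ‖inner 𝕜 (ψ k) g‖ ^ 2) * ∑ k ∈ s, ‖a k‖ ^ 2 := by
  have triangle : ‖inner 𝕜 g (∑ k ∈ s, a k • ψ k)‖ ≤
      ∑ k ∈ s, ‖inner 𝕜 (ψ k) g‖ * ‖a k‖ := by
    rw [inner_sum]
    refine norm_sum_le_of_le s fun k _ => ?_
    rw [inner_smul_right, norm_mul, norm_inner_symm g, mul_comm]
  calc ‖inner 𝕜 g (∑ k ∈ s, a k • ψ k)‖ ^ 2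
      ≤ (∑ k ∈ s, ‖inner 𝕜 (ψ k) g‖ * ‖a k‖) ^ 2 := by gcongr
    _ ≤ _ := Finset.sum_mul_sq_le_sq_mul_sq s _ _

theorem norm_inner_sq_le_of_hasSum [L.NeBot] {a : ι → 𝕜} {g y : H} {r : ℝ}
    (hg : Summable fun k => ‖inner 𝕜 (ψ k) g‖ ^ 2)
    (hy : HasSum (fun k => a k • ψ k) y L) (hr : HasSum (fun k => ‖a k‖ ^ 2) r L) :
    ‖inner 𝕜 g y‖ ^ 2 ≤ (∑' k, ‖inner 𝕜 (ψ k) g‖ ^ 2) * r := by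
  refine le_of_tendsto_of_tendsto' ((tendsto_const_nhds.inner hy).norm.pow 2)
    (hr.const_mul _) fun s => (norm_inner_sum_smul_sq_le ψ a g s).trans ?_
  gcongr
  exact hg.sum_le_tsum s fun k _ => sq_nonneg _

theorem hasSum_norm_inner_sq {f y : H}
    (h : HasSum (fun k => inner 𝕜 (ψ k) f • ψ k) y L) :
    HasSum (fun k => ‖inner 𝕜 (ψ k) f‖ ^ 2) (RCLike.re (inner 𝕜 f y)) L := by
  have inner_term (k : ι) :
      inner 𝕜 f (inner 𝕜 (ψ k) f • ψ k) = ((‖inner 𝕜 (ψ k) f‖ ^ 2 : ℝ) : 𝕜) := by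
    rw [inner_smul_right, ← inner_conj_symm f (ψ k), RCLike.mul_conj, RCLike.ofReal_pow]
  simpa only [innerSL_apply_apply, inner_term, RCLike.reCLM_apply, RCLike.ofReal_re] using
    (h.mapL (innerSL 𝕜 f)).mapL RCLike.reCLM

variable (𝕜 ψ L) in
/-- The frame operator `S f = ∑ k, ⟪ψ k, f⟫ ψ k`, as an unbounded operator whose domain consists of
all `f` for which the series converges in norm. The summation filter `L` fixes the mode of
convergence; an ordered series over `ℕ` is `SummationFilter.conditional ℕ`. -/
noncomputable def frameOperator [L.NeBot] : H →ₗ.[𝕜] H where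
  domain :=
    { carrier := {f | Summable (fun k => inner 𝕜 (ψ k) f • ψ k) L}
      zero_mem' := by simp
      add_mem' := fun hf hg => by simpa [inner_add_right, add_smul] using Summable.add hf hg
      smul_mem' := fun c f hf => by
        simpa [inner_smul_right, mul_smul] using Summable.const_smul c hf }
  toFun :=
    { toFun := fun f => ∑'[L] k, inner 𝕜 (ψ k) (f : H) • ψ k
      map_add' := fun f g => by
        simpa [inner_add_right, add_smul] using Summable.tsum_add f.2 g.2
      map_smul' := fun c f => by
        simpa [inner_smul_right, mul_smul] using Summable.tsum_const_smul c f.2 }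

theorem mem_graph_frameOperator [L.NeBot] {p : H × H} :
    p ∈ (frameOperator 𝕜 ψ L).graph ↔ HasSum (fun k => inner 𝕜 (ψ k) p.1 • ψ k) p.2 L := by
  rw [LinearPMap.mem_graph_iff]
  constructor
  · rintro ⟨f, hf, hy⟩
    rw [← hf, ← hy]
    exact f.2.hasSum
  · exact fun h => ⟨⟨p.1, h.summable⟩, rfl, h.tsum_eq⟩

theorem coe_graph_frameOperator_conditional (ψ : ℕ → H) :
    ((frameOperator 𝕜 ψ (.conditional ℕ)).graph : Set (H × H)) = {p : H × H |
      Tendsto (fun n => ∑ k ∈ Finset.range n, inner 𝕜 (ψ k) p.1 • ψ k) atTop (𝓝 p.2)} := by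
  ext p
  rw [SetLike.mem_coe, mem_graph_frameOperator, HasSum,
    SummationFilter.conditional_filter_eq_map_range, tendsto_map'_iff]
  rfl

theorem stmt9_general [L.NeBot]
    (hdense : Dense {f : H | Memℓp (fun k => inner 𝕜 (ψ k) f) 2}) :
    (frameOperator 𝕜 ψ L).IsClosable := by
  refine isClosable_of_norm_inner_sq_le hdense fun g hg =>
    ⟨∑' k, ‖inner 𝕜 (ψ k) g‖ ^ 2, fun p hp => ?_⟩
  have hCg : Summable fun k => ‖inner 𝕜 (ψ k) g‖ ^ 2 := by
    simpa using hg.summable (by norm_num)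
  have hS := mem_graph_frameOperator.mp hp
  exact norm_inner_sq_le_of_hasSum hCg hS (hasSum_norm_inner_sq hS)

end FrameOperator

/-- If the analysis operator `C` of a sequence `(ψ k)` is densely defined, then the frame
operator `S` is closable, i.e. the closure of the graph of `S` is again the graph of an
operator (equivalently, `S` admits a closed extension). -/
theorem stmt9 {H : Type*} [NormedAddCommGroup H] [InnerProductSpace ℂ H] [CompleteSpace H]
    (ψ : ℕ → H)
    (hdense : Dense {f : H | Memℓp (fun k => ⟪ψ k, f⟫) 2}) :
    ∀ (f y₁ y₂ : H),
      (f, y₁) ∈ closure {p : H × H |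
        Tendsto (fun n => ∑ k ∈ Finset.range n, ⟪ψ k, p.1⟫ • ψ k) atTop (𝓝 p.2)} →
      (f, y₂) ∈ closure {p : H × H |
        Tendsto (fun n => ∑ k ∈ Finset.range n, ⟪ψ k, p.1⟫ • ψ k) atTop (𝓝 p.2)} →
      y₁ = y₂ := by
  obtain ⟨T, hT⟩ := stmt9_general (L := .conditional ℕ) hdense
  rw [← coe_graph_frameOperator_conditional, ← Submodule.topologicalClosure_coe, hT]
  exact fun f y₁ y₂ h₁ h₂ => T.mem_graph_snd_inj h₁ h₂ rfl
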